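/- Let S' be the self-adjoint operator on L²(0,ε) associated with s'[f] = ∫₀^ε|f'|² dt + m|f(0)|² − β|f(ε)|² on H¹(0,ε), where m < 0, β > 0, α := −m. Then as α → +∞, E₁(S') = −α² + O(e^{−εα}), and there exist constants b⁻, b⁺, b > 0 independent of α such that b⁻ j² − b ≤ E_j(S') ≤ b⁺ j² for all j ≥ 2 and all α > 0. -/

import Mathlib

/-- `lam` is an eigenvalue of the operator `S' = −d²/dx²` on `(0, ε)` associated with
the form `s'[f] = ∫₀^ε |f'|² + m |f(0)|² − β |f(ε)|²` on `H¹(0,ε)`, i.e. with Robin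
boundary conditions `f'(0) = m f(0)` (Robin parameter `m` at `0`) and `f'(ε) = β f(ε)`. -/
def IsS'Eigen (ε β m lam : ℝ) : Prop :=
  ∃ f : ℝ → ℝ, ContDiff ℝ 2 f ∧ (∃ x ∈ Set.Icc 0 ε, f x ≠ 0) ∧
    (∀ x, deriv (deriv f) x = - lam * f x) ∧
    deriv f 0 = m * f 0 ∧ deriv f ε = β * f ε

/-!
For eigenfunctions with distinct eigenvalues at most `Λ`, the quotient
`(∫ |g'|² + m |g(0)|² - β |g(ε)|²) / ∫ g²` is at most `Λ` on their span. With `n + 1` of them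
there is a nonzero `g` in the span vanishing at the `n` points `i ε / n`, `i < n`. Such a `g` does
not see the Robin term at `0`, and the Poincaré inequality on each subinterval of length `ε / n`
gives `Λ ≥ n² / (2ε²) - 2β²`, uniformly in `m`. Upper bounds come from sign changes of the secular
function at the Dirichlet wave numbers `n π / ε`. Finally, the secular equation for `-k²` has
a root `k` exponentially close to `α = -m`, and by the lower bound for `n = 1` an eigenvalue below
`-2β²` can only be the first one.
-/

namespace RobinInterval

open Real

/-! ### Functions with prescribed zeros -/

lemma sq_integral_le_mul_integral_sq {h : ℝ → ℝ} {a b : ℝ} (hh : Continuous h) (hab : a ≤ b) :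
    (∫ x in a..b, h x) ^ 2 ≤ (b - a) * ∫ x in a..b, h x ^ 2 := by
  rcases hab.eq_or_lt with rfl | hlt
  · simp
  set I := ∫ x in a..b, h x with hI
  have expand : ∫ x in a..b, ((b - a) * h x - I) ^ 2 =
      (b - a) * ((b - a) * (∫ x in a..b, h x ^ 2) - I ^ 2) := by
    have hint : ∀ x, ((b - a) * h x - I) ^ 2 =
        (b - a) ^ 2 * h x ^ 2 - 2 * (b - a) * I * h x + I ^ 2 := fun x => by ring
    simp_rw [hint]
    rw [intervalIntegral.integral_add, intervalIntegral.integral_sub,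
      intervalIntegral.integral_const_mul, intervalIntegral.integral_const_mul,
      intervalIntegral.integral_const, ← hI, smul_eq_mul]
    · ring
    all_goals exact Continuous.intervalIntegrable (by fun_prop) a b
  have nonneg : 0 ≤ (b - a) * ((b - a) * (∫ x in a..b, h x ^ 2) - I ^ 2) := by
    rw [← expand]
    exact intervalIntegral.integral_nonneg hab fun x _ => sq_nonneg _
  linarith [nonneg_of_mul_nonneg_right nonneg (sub_pos.2 hlt)]

section Poincare

variable {g : ℝ → ℝ} {a b : ℝ}

lemma sq_sub_le_mul_integral_deriv_sq (hg : ContDiff ℝ 1 g) (hab : a ≤ b) :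
    (g b - g a) ^ 2 ≤ (b - a) * ∫ x in a..b, deriv g x ^ 2 := by
  have hg' := hg.continuous_deriv_one
  rw [← intervalIntegral.integral_deriv_eq_sub
    (fun x _ => (hg.differentiable one_ne_zero) x) (hg'.intervalIntegrable a b)]
  exact sq_integral_le_mul_integral_sq hg' hab

lemma integral_sq_le_of_left_eq_zero (hg : ContDiff ℝ 1 g) (hab : a ≤ b) (ha : g a = 0) :
    ∫ x in a..b, g x ^ 2 ≤ (b - a) ^ 2 * ∫ x in a..b, deriv g x ^ 2 := by
  have hg' := hg.continuous_deriv_one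
  have pointwise : ∀ x ∈ Set.Icc a b, g x ^ 2 ≤ (b - a) * ∫ y in a..b, deriv g y ^ 2 := by
    rintro x ⟨hax, hxb⟩
    calc g x ^ 2 ≤ (x - a) * ∫ y in a..x, deriv g y ^ 2 := by
          simpa [ha] using sq_sub_le_mul_integral_deriv_sq hg hax
      _ ≤ (b - a) * ∫ y in a..b, deriv g y ^ 2 := by
          gcongr
          · exact intervalIntegral.integral_nonneg hax fun y _ => sq_nonneg _
          · exact intervalIntegral.integral_mono_interval le_rfl hax hxb
              (.of_forall fun y => sq_nonneg _) ((hg'.pow 2).intervalIntegrable a b)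
  calc ∫ x in a..b, g x ^ 2 ≤ ∫ _ in a..b, (b - a) * ∫ y in a..b, deriv g y ^ 2 :=
        intervalIntegral.integral_mono_on hab ((hg.continuous.pow 2).intervalIntegrable a b)
          (by simp) pointwise
    _ = (b - a) ^ 2 * ∫ x in a..b, deriv g x ^ 2 := by
        rw [intervalIntegral.integral_const, smul_eq_mul]; ring

lemma integral_sq_le_of_forall_eq_zero {t : ℕ → ℝ} {n : ℕ} {h : ℝ} (hg : ContDiff ℝ 1 g)
    (ht : Monotone t) (hmesh : ∀ i < n, t (i + 1) - t i ≤ h) (hzero : ∀ i < n, g (t i) = 0) :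
    ∫ x in t 0..t n, g x ^ 2 ≤ h ^ 2 * ∫ x in t 0..t n, deriv g x ^ 2 := by
  have := hg.continuous_deriv_one
  have split (u : ℝ → ℝ) (hu : Continuous u) :
      ∫ x in t 0..t n, u x = ∑ i ∈ Finset.range n, ∫ x in t i..t (i + 1), u x :=
    (intervalIntegral.sum_integral_adjacent_intervals
      fun i _ => hu.intervalIntegrable (t i) (t (i + 1))).symm
  rw [split (fun x => g x ^ 2) (by fun_prop), split (fun x => deriv g x ^ 2) (by fun_prop),
    Finset.mul_sum]
  refine Finset.sum_le_sum fun i hi => ?_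
  have hi := Finset.mem_range.1 hi
  have hle : t i ≤ t (i + 1) := ht i.le_succ
  refine (integral_sq_le_of_left_eq_zero hg hle (hzero i hi)).trans ?_
  gcongr
  · exact intervalIntegral.integral_nonneg hle fun y _ => sq_nonneg _
  · exact hmesh i hi

lemma mul_sq_right_le_of_left_eq_zero (hg : ContDiff ℝ 1 g) (hab : a ≤ b) (ha : g a = 0)
    (β : ℝ) :
    β * g b ^ 2 ≤ (∫ x in a..b, deriv g x ^ 2) / 2 + 2 * β ^ 2 * ∫ x in a..b, g x ^ 2 := by
  have := hg.continuous_deriv_one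
  have hcont := hg.continuous
  have hder (x : ℝ) : HasDerivAt (fun x => β * g x ^ 2) (2 * β * (g x * deriv g x)) x := by
    refine ((((hg.differentiable one_ne_zero) x).hasDerivAt.pow 2).const_mul β).congr_deriv ?_
    ring
  calc β * g b ^ 2 = ∫ x in a..b, 2 * β * (g x * deriv g x) := by
        rw [intervalIntegral.integral_eq_sub_of_hasDerivAt (fun x _ => hder x)
          (Continuous.intervalIntegrable (by fun_prop) a b), ha]
        ring
    _ ≤ ∫ x in a..b, (deriv g x ^ 2 / 2 + 2 * β ^ 2 * g x ^ 2) :=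
        intervalIntegral.integral_mono_on hab (Continuous.intervalIntegrable (by fun_prop) a b)
          (Continuous.intervalIntegrable (by fun_prop) a b)
          fun x _ => by linarith [sq_nonneg (deriv g x - 2 * β * g x)]
    _ = _ := by
        rw [intervalIntegral.integral_add, intervalIntegral.integral_div,
          intervalIntegral.integral_const_mul]
        all_goals exact Continuous.intervalIntegrable (by fun_prop) a b

end Poincare

/-! ### Lower bounds for the eigenvalues -/

lemma integral_sum_mul_sum_of_orthogonal {ι : Type*} [Fintype ι] {f : ι → ℝ → ℝ} {a b : ℝ}
    (hf : ∀ i, Continuous (f i))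
    (horth : Pairwise fun i j => ∫ x in a..b, f i x * f j x = 0) (c d : ι → ℝ) :
    ∫ x in a..b, (∑ i, c i * f i x) * ∑ i, d i * f i x =
      ∑ i, c i * d i * ∫ x in a..b, f i x ^ 2 := by
  have hint (u : ℝ → ℝ) (hu : Continuous u := by fun_prop) :
      IntervalIntegrable u MeasureTheory.volume a b := hu.intervalIntegrable a b
  have expand (x : ℝ) : (∑ i, c i * f i x) * ∑ i, d i * f i x =
      ∑ i, ∑ j, c i * d j * (f i x * f j x) := by
    simp_rw [Finset.sum_mul_sum, mul_mul_mul_comm (c _)]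
  simp_rw [expand]
  rw [intervalIntegral.integral_finsetSum fun i _ => hint _]
  refine Finset.sum_congr rfl fun i _ => ?_
  rw [intervalIntegral.integral_finsetSum fun j _ => hint _,
    Finset.sum_eq_single_of_mem i (Finset.mem_univ i) fun j _ hji => ?_]
  · simp_rw [intervalIntegral.integral_const_mul, sq]
  · rw [intervalIntegral.integral_const_mul, horth hji.symm, mul_zero]

/-- The `C²` functions satisfying the boundary conditions of the operator `S'`: a core of its
domain. As in `IsS'Eigen`, functions on `(0, ε)` are given by extensions to the whole line. -/
def robinDomain (ε β m : ℝ) : Submodule ℝ (ℝ → ℝ) where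
  carrier := {f | ContDiff ℝ 2 f ∧ deriv f 0 = m * f 0 ∧ deriv f ε = β * f ε}
  zero_mem' := by
    refine ⟨contDiff_const, ?_, ?_⟩ <;> simp
  add_mem' := by
    rintro f g ⟨hf, hf0, hfε⟩ ⟨hg, hg0, hgε⟩
    have hadd (x : ℝ) : deriv (f + g) x = deriv f x + deriv g x :=
      deriv_add (hf.differentiable two_ne_zero x) (hg.differentiable two_ne_zero x)
    refine ⟨hf.add hg, ?_, ?_⟩
    · rw [hadd, hf0, hg0, Pi.add_apply, mul_add]
    · rw [hadd, hfε, hgε, Pi.add_apply, mul_add]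
  smul_mem' := by
    rintro c f ⟨hf, hf0, hfε⟩
    have hsmul (x : ℝ) : deriv (c • f) x = c * deriv f x :=
      deriv_const_smul c (hf.differentiable two_ne_zero x)
    refine ⟨hf.const_smul c, ?_, ?_⟩
    · rw [hsmul, hf0, Pi.smul_apply, smul_eq_mul, mul_left_comm]
    · rw [hsmul, hfε, Pi.smul_apply, smul_eq_mul, mul_left_comm]

/-- `f` is an eigenfunction of `S'` for the eigenvalue `lam`, the witness asked for in `IsS'Eigen`;
the equation is imposed on the whole line. -/
structure IsEigenfunction (ε β m lam : ℝ) (f : ℝ → ℝ) : Prop where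
  mem_robinDomain : f ∈ robinDomain ε β m
  deriv_deriv : ∀ x, deriv (deriv f) x = -lam * f x
  exists_ne_zero : ∃ x ∈ Set.Icc 0 ε, f x ≠ 0

lemma isS'Eigen_iff_exists_isEigenfunction {ε β m lam : ℝ} :
    IsS'Eigen ε β m lam ↔ ∃ f, IsEigenfunction ε β m lam f :=
  ⟨fun ⟨f, hf, hne, hode, h0, hε⟩ => ⟨f, ⟨hf, h0, hε⟩, hode, hne⟩,
    fun ⟨f, ⟨hf, h0, hε⟩, hode, hne⟩ => ⟨f, hf, hne, hode, h0, hε⟩⟩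

section LowerBound

variable {ε β m : ℝ} {f g : ℝ → ℝ}

lemma integral_deriv_deriv_mul (hf : f ∈ robinDomain ε β m) (hg : ContDiff ℝ 1 g) :
    ∫ x in 0..ε, deriv (deriv f) x * g x =
      β * (f ε * g ε) - m * (f 0 * g 0) - ∫ x in 0..ε, deriv f x * deriv g x := by
  obtain ⟨hf2, hf0, hfε⟩ := hf
  have hf' : ContDiff ℝ 1 (deriv f) := hf2.deriv'
  rw [intervalIntegral.integral_mul_deriv_eq_deriv_mul
      (fun x _ => (hf'.differentiable one_ne_zero x).hasDerivAt)
      (fun x _ => (hg.differentiable one_ne_zero x).hasDerivAt)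
      (hf'.continuous_deriv_one.intervalIntegrable _ _)
      (hg.continuous_deriv_one.intervalIntegrable _ _), hf0, hfε]
  ring

lemma integral_deriv_deriv_mul_comm (hf : f ∈ robinDomain ε β m) (hg : g ∈ robinDomain ε β m) :
    ∫ x in 0..ε, deriv (deriv f) x * g x = ∫ x in 0..ε, deriv (deriv g) x * f x := by
  rw [integral_deriv_deriv_mul hf (hg.1.of_le one_le_two),
    integral_deriv_deriv_mul hg (hf.1.of_le one_le_two)]
  simp_rw [mul_comm]

lemma IsEigenfunction.integral_mul_eq_zero {lam μ : ℝ} (hf : IsEigenfunction ε β m lam f)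
    (hg : IsEigenfunction ε β m μ g) (hne : lam ≠ μ) : ∫ x in 0..ε, f x * g x = 0 := by
  have hsymm := integral_deriv_deriv_mul_comm hf.mem_robinDomain hg.mem_robinDomain
  simp_rw [hf.deriv_deriv, hg.deriv_deriv, mul_assoc, mul_comm (g _),
    intervalIntegral.integral_const_mul] at hsymm
  have hmul : (μ - lam) * ∫ x in 0..ε, f x * g x = 0 := by linear_combination hsymm
  exact (mul_eq_zero.1 hmul).resolve_left (sub_ne_zero.2 hne.symm)

lemma IsEigenfunction.integral_sq_pos {lam : ℝ} (hε : 0 < ε)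
    (hf : IsEigenfunction ε β m lam f) : 0 < ∫ x in 0..ε, f x ^ 2 := by
  obtain ⟨x, hx, hfx⟩ := hf.exists_ne_zero
  exact intervalIntegral.integral_pos hε (hf.mem_robinDomain.1.continuous.pow 2).continuousOn
    (fun _ _ => sq_nonneg _) ⟨x, hx, by positivity⟩

lemma mul_integral_sq_le_of_forall_eq_zero (hε : 0 < ε) (hg : g ∈ robinDomain ε β m) {n : ℕ}
    (hn : 0 < n) (hzero : ∀ i < n, g (i * (ε / n)) = 0) :
    ((n / ε) ^ 2 / 2 - 2 * β ^ 2) * ∫ x in 0..ε, g x ^ 2 ≤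
      -∫ x in 0..ε, deriv (deriv g) x * g x := by
  have hg1 : ContDiff ℝ 1 g := hg.1.of_le one_le_two
  have hn' : (0 : ℝ) < n := by exact_mod_cast hn
  have hg0 : g 0 = 0 := by simpa using hzero 0 hn
  have poincare : (n / ε) ^ 2 * ∫ x in 0..ε, g x ^ 2 ≤ ∫ x in 0..ε, deriv g x ^ 2 := by
    have h := integral_sq_le_of_forall_eq_zero (t := fun i => i * (ε / n)) (h := ε / n) hg1
      (fun i j hij => by dsimp only; gcongr) (fun i _ => by push_cast; linarith) hzero
    simp only [Nat.cast_zero, zero_mul, mul_div_cancel₀ _ hn'.ne'] at h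
    calc (n / ε) ^ 2 * ∫ x in 0..ε, g x ^ 2
        ≤ (n / ε) ^ 2 * ((ε / n) ^ 2 * ∫ x in 0..ε, deriv g x ^ 2) := by gcongr
      _ = ∫ x in 0..ε, deriv g x ^ 2 := by field_simp
  have trace := mul_sq_right_le_of_left_eq_zero hg1 hε.le hg0 β
  rw [integral_deriv_deriv_mul hg hg1, hg0]
  simp_rw [← sq]
  linarith

section Combination

variable {ι : Type*} {f : ι → ℝ → ℝ} {lam : ι → ℝ}

lemma pairwise_integral_mul_eq_zero (hinj : Function.Injective lam)
    (hf : ∀ i, IsEigenfunction ε β m (lam i) (f i)) :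
    Pairwise fun i j => ∫ x in 0..ε, f i x * f j x = 0 :=
  fun i j hij => (hf i).integral_mul_eq_zero (hf j) (hinj.ne hij)

variable [Fintype ι]

lemma deriv_deriv_sum_smul (hf : ∀ i, IsEigenfunction ε β m (lam i) (f i)) (c : ι → ℝ)
    (x : ℝ) : deriv (deriv (∑ i, c i • f i)) x = ∑ i, -(lam i * c i) * f i x := by
  have hf2 (i : ι) : ContDiff ℝ 2 (f i) := (hf i).mem_robinDomain.1
  have hderiv : deriv (∑ i, c i • f i) = ∑ i, c i • deriv (f i) := by
    funext y
    have hdiff (i : ι) : DifferentiableAt ℝ (f i) y := (hf2 i).differentiable two_ne_zero y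
    rw [deriv_sum fun i _ => (hdiff i).const_smul (c i), Finset.sum_apply]
    exact Finset.sum_congr rfl fun i _ => deriv_const_smul (c i) (hdiff i)
  have hdiff (i : ι) : DifferentiableAt ℝ (deriv (f i)) x :=
    (hf2 i).deriv'.differentiable one_ne_zero x
  rw [hderiv, deriv_sum fun i _ => (hdiff i).const_smul (c i)]
  refine Finset.sum_congr rfl fun i _ => ?_
  rw [deriv_const_smul (c i) (hdiff i), (hf i).deriv_deriv, smul_eq_mul]
  ring

lemma integral_sq_sum_smul (hinj : Function.Injective lam)
    (hf : ∀ i, IsEigenfunction ε β m (lam i) (f i)) (c : ι → ℝ) :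
    ∫ x in 0..ε, (∑ i, c i • f i) x ^ 2 = ∑ i, c i ^ 2 * ∫ x in 0..ε, f i x ^ 2 := by
  simpa only [Finset.sum_apply, Pi.smul_apply, smul_eq_mul, sq (∑ i, c i * f i _), sq (c _)] using
    integral_sum_mul_sum_of_orthogonal (fun i => (hf i).mem_robinDomain.1.continuous)
      (pairwise_integral_mul_eq_zero hinj hf) c c

lemma integral_sq_sum_smul_pos (hε : 0 < ε) (hinj : Function.Injective lam)
    (hf : ∀ i, IsEigenfunction ε β m (lam i) (f i)) {c : ι → ℝ} (hc : c ≠ 0) :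
    0 < ∫ x in 0..ε, (∑ i, c i • f i) x ^ 2 := by
  rw [integral_sq_sum_smul hinj hf]
  obtain ⟨i, hi⟩ := Function.ne_iff.1 hc
  have hpos (j : ι) := (hf j).integral_sq_pos hε
  exact Finset.sum_pos' (fun j _ => mul_nonneg (sq_nonneg _) (hpos j).le)
    ⟨i, Finset.mem_univ i, mul_pos (sq_pos_of_ne_zero hi) (hpos i)⟩

lemma neg_integral_deriv_deriv_mul_le (hε : 0 < ε) (hinj : Function.Injective lam)
    (hf : ∀ i, IsEigenfunction ε β m (lam i) (f i)) {Λ : ℝ} (hΛ : ∀ i, lam i ≤ Λ)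
    (c : ι → ℝ) :
    -∫ x in 0..ε, deriv (deriv (∑ i, c i • f i)) x * (∑ i, c i • f i) x ≤
      Λ * ∫ x in 0..ε, (∑ i, c i • f i) x ^ 2 := by
  rw [integral_sq_sum_smul hinj hf]
  simp_rw [deriv_deriv_sum_smul hf, Finset.sum_apply, Pi.smul_apply, smul_eq_mul]
  rw [integral_sum_mul_sum_of_orthogonal (fun i => (hf i).mem_robinDomain.1.continuous)
      (pairwise_integral_mul_eq_zero hinj hf), ← Finset.sum_neg_distrib, Finset.mul_sum]
  refine Finset.sum_le_sum fun i _ => ?_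
  have hpos := (hf i).integral_sq_pos hε
  calc -(-(lam i * c i) * c i * ∫ x in 0..ε, f i x ^ 2)
      = lam i * (c i ^ 2 * ∫ x in 0..ε, f i x ^ 2) := by ring
    _ ≤ Λ * (c i ^ 2 * ∫ x in 0..ε, f i x ^ 2) := by
        gcongr
        exact hΛ i

end Combination

lemma exists_ne_zero_forall_sum_smul_apply_eq_zero {ι X : Type*} [Fintype ι]
    {n : ℕ} (hn : n < Fintype.card ι) (f : ι → X → ℝ) (t : ℕ → X) :
    ∃ c : ι → ℝ, c ≠ 0 ∧ ∀ k < n, (∑ i, c i • f i) (t k) = 0 := by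
  let evaluation : (ι → ℝ) →ₗ[ℝ] Fin n → ℝ :=
    Matrix.mulVecLin (Matrix.of fun k i => f i (t k))
  obtain ⟨c, hker, hc⟩ := (Submodule.ne_bot_iff _).1
    (LinearMap.ker_ne_bot_of_finrank_lt (f := evaluation) (by simpa using hn))
  refine ⟨c, hc, fun k hk => ?_⟩
  have hk0 := congrFun (LinearMap.mem_ker.1 hker) ⟨k, hk⟩
  simpa [evaluation, Matrix.mulVec, dotProduct, mul_comm] using hk0

theorem le_of_forall_isS'Eigen_le {ι : Type*} [Fintype ι] {lam : ι → ℝ} (hε : 0 < ε)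
    (hinj : Function.Injective lam) (hlam : ∀ i, IsS'Eigen ε β m (lam i)) {Λ : ℝ}
    (hΛ : ∀ i, lam i ≤ Λ) {n : ℕ} (hn : 0 < n) (hcard : n < Fintype.card ι) :
    (n / ε) ^ 2 / 2 - 2 * β ^ 2 ≤ Λ := by
  choose f hf using fun i => isS'Eigen_iff_exists_isEigenfunction.1 (hlam i)
  obtain ⟨c, hc, hzero⟩ :=
    exists_ne_zero_forall_sum_smul_apply_eq_zero hcard f fun k => k * (ε / n)
  have hmem : ∑ i, c i • f i ∈ robinDomain ε β m :=
    Submodule.sum_smul_mem _ c fun i _ => (hf i).mem_robinDomain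
  exact le_of_mul_le_mul_right
    ((mul_integral_sq_le_of_forall_eq_zero hε hmem hn hzero).trans
      (neg_integral_deriv_deriv_mul_le hε hinj hf hΛ c))
    (integral_sq_sum_smul_pos hε hinj hf hc)

theorem le_of_strictMono_of_forall_isS'Eigen {e : ℕ → ℝ} (hε : 0 < ε) (he : StrictMono e)
    (heig : ∀ n, IsS'Eigen ε β m (e n)) {n : ℕ} (hn : 0 < n) :
    1 / (8 * ε ^ 2) * (n + 1) ^ 2 - 2 * β ^ 2 ≤ e n := by
  have hn1 : (1 : ℝ) ≤ n := by exact_mod_cast hn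
  calc 1 / (8 * ε ^ 2) * (n + 1) ^ 2 - 2 * β ^ 2
      ≤ 1 / (8 * ε ^ 2) * (n + n) ^ 2 - 2 * β ^ 2 := by gcongr
    _ = (n / ε) ^ 2 / 2 - 2 * β ^ 2 := by field_simp; ring
    _ ≤ e n := le_of_forall_isS'Eigen_le (lam := fun i : Fin (n + 1) => e i) hε
        (he.injective.comp Fin.val_injective) (fun i => heig i)
        (fun i => he.monotone (Nat.lt_succ_iff.1 i.2)) hn (by simp)

end LowerBound

/-! ### Secular equations -/

section Secular

variable {ε β m k : ℝ}

lemma isS'Eigen_of_hasDerivAt {lam : ℝ} {f f' : ℝ → ℝ} (hε : 0 ≤ ε)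
    (hf : ∀ x, HasDerivAt f (f' x) x) (hf' : ∀ x, HasDerivAt f' (-lam * f x) x)
    (h0 : f' 0 = m * f 0) (hfε : f' ε = β * f ε) (hne : f 0 ≠ 0) : IsS'Eigen ε β m lam := by
  have hderiv : deriv f = f' := funext fun x => (hf x).deriv
  have hderiv' : deriv f' = fun x => -lam * f x := funext fun x => (hf' x).deriv
  have hdiff : Differentiable ℝ f := fun x => (hf x).differentiableAt
  have hdiff' : ContDiff ℝ 1 f' := contDiff_one_iff_deriv.2
    ⟨fun x => (hf' x).differentiableAt, hderiv' ▸ continuous_const.mul hdiff.continuous⟩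
  refine ⟨f, ?_, ⟨0, ⟨le_rfl, hε⟩, hne⟩, fun x => ?_, ?_, ?_⟩
  · exact (contDiff_succ_iff_deriv (n := 1)).2 ⟨hdiff, by simp, hderiv ▸ hdiff'⟩
  · rw [hderiv, hderiv']
  · rw [hderiv, h0]
  · rw [hderiv, hfε]

lemma isS'Eigen_neg_sq_of_secular (hε : 0 ≤ ε) (hk : k ≠ 0)
    (h : (k + m) * (k - β) * exp (k * ε) = (k - m) * (k + β) * exp (-(k * ε))) :
    IsS'Eigen ε β m (-k ^ 2) := by
  have hexp (s x : ℝ) : HasDerivAt (fun x => exp (s * x)) (s * exp (s * x)) x := by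
    simpa [mul_comm] using ((hasDerivAt_id x).const_mul s).exp
  refine isS'Eigen_of_hasDerivAt
    (f := fun x => (k + m) * exp (k * x) + (k - m) * exp (-k * x))
    (f' := fun x => k * ((k + m) * exp (k * x) - (k - m) * exp (-k * x))) hε
    (fun x => ?_) (fun x => ?_) ?_ ?_ ?_
  · refine (((hexp k x).const_mul _).add ((hexp (-k) x).const_mul _)).congr_deriv ?_
    ring
  · refine ((((hexp k x).const_mul _).sub
      ((hexp (-k) x).const_mul _)).const_mul k).congr_deriv ?_
    ring
  · simp only [mul_zero, exp_zero]; ring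
  · simp only [neg_mul]; linear_combination h
  · simpa [← two_mul] using hk

lemma isS'Eigen_sq_of_secular (hε : 0 ≤ ε) (hk : k ≠ 0)
    (h : (k ^ 2 + m * β) * sin (k * ε) + (β - m) * k * cos (k * ε) = 0) :
    IsS'Eigen ε β m (k ^ 2) := by
  have hmul (x : ℝ) : HasDerivAt (fun x => k * x) k x := by
    simpa using (hasDerivAt_id x).const_mul k
  refine isS'Eigen_of_hasDerivAt
    (f := fun x => k * cos (k * x) + m * sin (k * x))
    (f' := fun x => k * (m * cos (k * x) - k * sin (k * x))) hε
    (fun x => ?_) (fun x => ?_) ?_ ?_ ?_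
  · refine (((hmul x).cos.const_mul k).add ((hmul x).sin.const_mul m)).congr_deriv ?_
    ring
  · refine ((((hmul x).cos.const_mul m).sub
      ((hmul x).sin.const_mul k)).const_mul k).congr_deriv ?_
    ring
  · simp only [mul_zero, cos_zero, sin_zero]; ring
  · linear_combination -h
  · simpa using hk

end Secular

/-! ### Upper bounds for the eigenvalues -/

section UpperBound

variable {ε β m : ℝ}

lemma exists_mem_Ioo_eq_zero_of_mul_neg {F : ℝ → ℝ} {a b : ℝ} (hab : a ≤ b)
    (hF : ContinuousOn F (Set.Icc a b)) (hsign : F a * F b < 0) :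
    ∃ c ∈ Set.Ioo a b, F c = 0 := by
  rcases mul_neg_iff.1 hsign with ⟨ha, hb⟩ | ⟨ha, hb⟩
  · exact intermediate_value_Ioo' hab hF ⟨hb, ha⟩
  · exact intermediate_value_Ioo hab hF ⟨ha, hb⟩

lemma exists_isS'Eigen_sq_mem_Ico (hε : 0 < ε) {n : ℕ} (hn : 0 < n) :
    ∃ k ∈ Set.Ico (n * π / ε) ((n + 1 : ℕ) * π / ε), IsS'Eigen ε β m (k ^ 2) := by
  set F : ℝ → ℝ := fun k =>
    (k ^ 2 + m * β) * sin (k * ε) + (β - m) * k * cos (k * ε) with hF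
  have F_node (i : ℕ) : F (i * π / ε) = (β - m) * (i * π / ε) * (-1) ^ i := by
    simp [hF, div_mul_cancel₀ _ hε.ne', sin_nat_mul_pi, cos_nat_mul_pi]
  have hpos : 0 < n * π / ε := by positivity
  have hlt : n * π / ε < (n + 1 : ℕ) * π / ε := by gcongr; exact n.lt_succ_self
  suffices ∃ k ∈ Set.Ico (n * π / ε) ((n + 1 : ℕ) * π / ε), F k = 0 by
    obtain ⟨k, hk, hFk⟩ := this
    exact ⟨k, hk, isS'Eigen_sq_of_secular hε.le (hpos.trans_le hk.1).ne' hFk⟩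
  rcases eq_or_ne β m with rfl | hne
  · exact ⟨_, Set.left_mem_Ico.2 hlt, by simp [F_node]⟩
  have hsign : F (n * π / ε) * F ((n + 1 : ℕ) * π / ε) < 0 := by
    have : 0 < (β - m) ^ 2 := sq_pos_of_ne_zero (sub_ne_zero.2 hne)
    have hpow : ((-1 : ℝ) ^ n) ^ 2 = 1 := by rw [← pow_mul, mul_comm, pow_mul]; simp
    calc F (n * π / ε) * F ((n + 1 : ℕ) * π / ε)
        = -((β - m) ^ 2 * (n * π / ε) * ((n + 1 : ℕ) * π / ε)) := by
          rw [F_node, F_node, pow_succ]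
          linear_combination
            -((β - m) ^ 2 * (n * π / ε) * ((n + 1 : ℕ) * π / ε)) * hpow
      _ < 0 := by rw [neg_lt_zero]; positivity
  have hcont : Continuous F := by simp only [hF]; fun_prop
  obtain ⟨k, hk, hFk⟩ := exists_mem_Ioo_eq_zero_of_mul_neg hlt.le hcont.continuousOn hsign
  exact ⟨k, Set.Ioo_subset_Ico_self hk, hFk⟩

lemma le_of_strictMono_of_range_subset {α : Type*} [LinearOrder α] {e μ : ℕ → α}
    (he : StrictMono e) (hμ : StrictMono μ) (hrange : Set.range μ ⊆ Set.range e) : e ≤ μ := by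
  choose g hg using fun n => hrange ⟨n, rfl⟩
  have hg_mono : StrictMono g := fun i j hij => he.lt_iff_lt.1 (by rw [hg, hg]; exact hμ hij)
  intro n
  calc e n ≤ e (g n) := he.monotone hg_mono.le_apply
    _ = μ n := hg n

theorem le_of_strictMono_of_forall_isS'Eigen_mem_range {e : ℕ → ℝ} (hε : 0 < ε)
    (he : StrictMono e) (hmem : ∀ lam, IsS'Eigen ε β m lam → lam ∈ Set.range e) (n : ℕ) :
    e n ≤ (2 * π / ε) ^ 2 * (n + 1) ^ 2 := by
  choose k hk hk_eigen using fun n : ℕ =>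
    exists_isS'Eigen_sq_mem_Ico (ε := ε) (β := β) (m := m) hε n.succ_pos
  have hk_pos (n : ℕ) : 0 < k n := lt_of_lt_of_le (by positivity) (hk n).1
  have hk_mono : StrictMono fun n => k n ^ 2 := strictMono_nat_of_lt_succ fun n =>
    pow_lt_pow_left₀ ((hk n).2.trans_le (hk (n + 1)).1) (hk_pos n).le two_ne_zero
  have hrange : Set.range (fun n => k n ^ 2) ⊆ Set.range e :=
    Set.range_subset_iff.2 fun n => hmem _ (hk_eigen n)
  refine (le_of_strictMono_of_range_subset he hk_mono hrange n).trans ?_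
  have hkn : k n ≤ 2 * π / ε * (n + 1) := by
    calc k n ≤ (n + 1 + 1 : ℕ) * π / ε := (hk n).2.le
      _ ≤ (2 * (n + 1) : ℕ) * π / ε := by gcongr; omega
      _ = 2 * π / ε * (n + 1) := by push_cast; ring
  rw [← mul_pow]
  have := (hk_pos n).le
  gcongr

end UpperBound

/-! ### The ground state -/

section GroundState

variable {ε β α k : ℝ}

lemma five_mul_exp_neg_le_exp {x : ℝ} (hx : 2 ≤ x) : 5 * exp (-x) ≤ exp x := by
  calc 5 * exp (-x) ≤ exp (2 * x) * exp (-x) := by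
        gcongr; linarith [add_one_le_exp (2 * x)]
    _ = exp x := by rw [← exp_add]; ring_nf

lemma exists_secular_root (hε : 0 < ε) (hαβ : 3 * |β| ≤ α) (hαε : 1 / ε ≤ α) :
    ∃ k, α < k ∧
      (k - α) * (k - β) * exp (k * ε) = (k + α) * (k + β) * exp (-(k * ε)) := by
  have hα : 0 < α := (one_div_pos.2 hε).trans_le hαε
  have hβ := abs_le.1 (show |β| ≤ α / 3 by linarith)
  set F : ℝ → ℝ := fun k =>
    (k - α) * (k - β) * exp (k * ε) - (k + α) * (k + β) * exp (-(k * ε)) with hF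
  have hF_left : F α < 0 := by
    have : 0 < (α + α) * (α + β) * exp (-(α * ε)) := by
      have : 0 < α + β := by linarith
      positivity
    simp only [hF]; linarith
  have hF_right : 0 < F (2 * α) := by
    have hexp : 5 * exp (-(2 * α * ε)) ≤ exp (2 * α * ε) :=
      five_mul_exp_neg_le_exp (by linarith [(div_le_iff₀ hε).1 hαε])
    have hfactor : (2 * α + α) * (2 * α + β) < α * (2 * α - β) * 5 := by nlinarith
    have hnonneg : 0 ≤ α * (2 * α - β) := mul_nonneg hα.le (by linarith)
    refine sub_pos.2 ?_
    calc (2 * α + α) * (2 * α + β) * exp (-(2 * α * ε))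
        < α * (2 * α - β) * 5 * exp (-(2 * α * ε)) := by gcongr
      _ = α * (2 * α - β) * (5 * exp (-(2 * α * ε))) := by ring
      _ ≤ α * (2 * α - β) * exp (2 * α * ε) := by gcongr
      _ = (2 * α - α) * (2 * α - β) * exp (2 * α * ε) := by ring
  have hcont : Continuous F := by simp only [hF]; fun_prop
  obtain ⟨k, hk, hFk⟩ :=
    intermediate_value_Ioo (by linarith : α ≤ 2 * α) hcont.continuousOn ⟨hF_left, hF_right⟩
  exact ⟨k, hk.1, sub_eq_zero.1 hFk⟩

lemma sq_mul_exp_neg_le (hε : 0 < ε) (hk : 0 ≤ k) :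
    k ^ 2 * exp (-(k * ε)) ≤ 2 / ε ^ 2 := by
  rw [exp_neg, ← div_eq_mul_inv, div_le_div_iff₀ (exp_pos _) (by positivity)]
  nlinarith [quadratic_le_exp_of_nonneg (mul_nonneg hk hε.le), mul_nonneg hk hε.le]

lemma sq_sub_sq_le_of_secular (hε : 0 < ε) (hα : 0 < α) (hαβ : 3 * β ≤ α) (hαk : α < k)
    (h : (k - α) * (k - β) * exp (k * ε) = (k + α) * (k + β) * exp (-(k * ε))) :
    k ^ 2 - α ^ 2 ≤ 16 / ε ^ 2 * exp (-(α * ε)) := by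
  have hk : 0 < k := hα.trans hαk
  have hkβ : 0 < k - β := by linarith
  set x := exp (-(k * ε)) with hx
  have hx_inv : exp (k * ε) * x = 1 := by rw [hx, ← exp_add, add_neg_cancel, exp_zero]
  have gap : k - α ≤ 2 * (k + α) * x ^ 2 := by
    refine le_of_mul_le_mul_right ?_ hkβ
    calc (k - α) * (k - β) = (k + α) * (k + β) * x ^ 2 := by
          linear_combination x * h - (k - α) * (k - β) * hx_inv
      _ ≤ (k + α) * (2 * (k - β)) * x ^ 2 := by gcongr; linarith
      _ = 2 * (k + α) * x ^ 2 * (k - β) := by ring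
  calc k ^ 2 - α ^ 2 = (k + α) * (k - α) := by ring
    _ ≤ (k + α) * (2 * (k + α) * x ^ 2) := by gcongr
    _ ≤ (k + k) * (2 * (k + k) * x ^ 2) := by gcongr
    _ = 8 * (k ^ 2 * x) * x := by ring
    _ ≤ 8 * (2 / ε ^ 2) * exp (-(α * ε)) := by
        rw [hx]
        gcongr
        exact sq_mul_exp_neg_le hε hk.le
    _ = 16 / ε ^ 2 * exp (-(α * ε)) := by ring

lemma isLeast_of_isS'Eigen_of_le {m lam : ℝ} (hε : 0 < ε) (h : IsS'Eigen ε β m lam)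
    (hlam : lam ≤ -2 * β ^ 2) : IsLeast {μ | IsS'Eigen ε β m μ} lam := by
  refine ⟨h, fun μ hμ => ?_⟩
  by_contra! hlt
  have := le_of_forall_isS'Eigen_le (lam := ![μ, lam]) (Λ := lam) hε
    (by simp [Function.Injective, Fin.forall_fin_two, hlt.ne, hlt.ne'])
    (Fin.forall_fin_two.2 ⟨hμ, h⟩) (by simp [Fin.forall_fin_two, hlt.le]) one_pos (by simp)
  have : 0 < ((1 : ℕ) / ε) ^ 2 := by positivity
  linarith

theorem abs_sInf_isS'Eigen_add_sq_le (hε : 0 < ε) (hαβ : 3 * |β| ≤ α) (hαε : 1 / ε ≤ α) :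
    |sInf {lam | IsS'Eigen ε β (-α) lam} + α ^ 2| ≤ 16 / ε ^ 2 * exp (-(α * ε)) := by
  have hα : 0 < α := (one_div_pos.2 hε).trans_le hαε
  obtain ⟨k, hαk, hk⟩ := exists_secular_root hε hαβ hαε
  have hβk : (3 * |β|) ^ 2 < k ^ 2 := by gcongr; linarith
  have hβα : 3 * β ≤ α := by linarith [le_abs_self β]
  have hleast : IsLeast {lam | IsS'Eigen ε β (-α) lam} (-k ^ 2) := by
    refine isLeast_of_isS'Eigen_of_le hε
      (isS'Eigen_neg_sq_of_secular hε.le (hα.trans hαk).ne' ?_) ?_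
    · simpa [← sub_eq_add_neg] using hk
    · rw [mul_pow, sq_abs] at hβk
      linarith [sq_nonneg β]
  have hsq : α ^ 2 < k ^ 2 := by gcongr
  rw [hleast.csInf_eq, abs_of_nonpos (by linarith)]
  linarith [sq_sub_sq_le_of_secular hε hα hβα hαk hk]

end GroundState
end RobinInterval

open RobinInterval in
theorem stmt_7_general (ε β : ℝ) (hε : 0 < ε) :
    (∃ α₀ K : ℝ, 0 < α₀ ∧ 0 < K ∧ ∀ m : ℝ, α₀ ≤ -m →
      |sInf {lam | IsS'Eigen ε β m lam} + m ^ 2| ≤ K * Real.exp (-ε * (-m))) ∧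
    (∃ bm bp b : ℝ, 0 < bm ∧ 0 < bp ∧ 0 < b ∧
      ∀ m : ℝ, ∀ E : ℕ → ℝ,
        (∀ i j : ℕ, 1 ≤ i → i < j → E i < E j) →
        (∀ j : ℕ, 1 ≤ j → IsS'Eigen ε β m (E j)) →
        (∀ lam, IsS'Eigen ε β m lam → ∃ j : ℕ, 1 ≤ j ∧ E j = lam) →
        ∀ j : ℕ, 2 ≤ j → bm * (j : ℝ) ^ 2 - b ≤ E j ∧ E j ≤ bp * (j : ℝ) ^ 2) := by
  refine ⟨⟨max (3 * |β|) (1 / ε), 16 / ε ^ 2, by positivity, by positivity, fun m hm => ?_⟩,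
    1 / (8 * ε ^ 2), (2 * Real.pi / ε) ^ 2, 2 * β ^ 2 + 1, by positivity, by positivity,
    by positivity, fun m E hmono heig hsurj j hj => ?_⟩
  · simpa [mul_comm] using
      abs_sInf_isS'Eigen_add_sq_le hε (le_of_max_le_left hm) (le_of_max_le_right hm)
  have he : StrictMono fun n => E (n + 1) := fun i l hil => hmono _ _ (by omega) (by omega)
  obtain ⟨n, rfl⟩ : ∃ n, j = n + 1 := ⟨j - 1, by omega⟩
  push_cast
  constructor
  · linarith [le_of_strictMono_of_forall_isS'Eigen hε he (fun i => heig (i + 1) (by omega))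
      (n := n) (by omega)]
  · refine le_of_strictMono_of_forall_isS'Eigen_mem_range (β := β) (m := m) hε he
      (fun lam hlam => ?_) n
    obtain ⟨i, hi, rfl⟩ := hsurj lam hlam
    exact ⟨i - 1, by simp [hi]⟩

/-- With `m < 0`, `α := −m`: as `α → +∞` one has `E₁(S') = −α² + O(e^{−εα})`, and there
are constants `b⁻, b⁺, b > 0` independent of `α` with `b⁻ j² − b ≤ E_j(S') ≤ b⁺ j²` for
all `j ≥ 2` and all `α > 0` (here `E` is the enumeration of the eigenvalues of `S'` in
increasing order, `E j` being the `j`-th eigenvalue for `j ≥ 1`). -/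
theorem stmt_7 (ε β : ℝ) (hε : 0 < ε) (hβ : 0 < β) :
    (∃ α₀ K : ℝ, 0 < α₀ ∧ 0 < K ∧ ∀ m : ℝ, m < 0 → α₀ ≤ -m →
      |sInf {lam | IsS'Eigen ε β m lam} + m ^ 2| ≤ K * Real.exp (-ε * (-m))) ∧
    (∃ bm bp b : ℝ, 0 < bm ∧ 0 < bp ∧ 0 < b ∧
      ∀ m : ℝ, m < 0 → ∀ E : ℕ → ℝ,
        (∀ i j : ℕ, 1 ≤ i → i < j → E i < E j) →
        (∀ j : ℕ, 1 ≤ j → IsS'Eigen ε β m (E j)) →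
        (∀ lam, IsS'Eigen ε β m lam → ∃ j : ℕ, 1 ≤ j ∧ E j = lam) →
        ∀ j : ℕ, 2 ≤ j → bm * (j : ℝ) ^ 2 - b ≤ E j ∧ E j ≤ bp * (j : ℝ) ^ 2) := by
  obtain ⟨⟨α₀, K, hα₀, hK, ground⟩, bm, bp, b, hbm, hbp, hb, bounds⟩ := stmt_7_general ε β hε
  exact ⟨⟨α₀, K, hα₀, hK, fun m _ => ground m⟩, bm, bp, b, hbm, hbp, hb, fun m _ => bounds m⟩
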